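/- arXiv:2509.02963 — 2 statements merged into one kernel-verified Lean document; each statement's English description precedes it below -/
import Mathlib

section
/- If the tuple E is cyclic (i.e. E is a union of circuits), then every basis of E is a BK-set; in particular, the Minkowski rank of E equals dim ⟨E⟩. -/
/-!
The defect is submodular, since `dim ⟨S ∪ T⟩ + dim (⟨S⟩ ∩ ⟨T⟩) = dim ⟨S⟩ + dim ⟨T⟩`. Hence inside
an independent set `B` the subsets of defect `0` are closed under union, and there is a largest
one, `T`. If `B` is a basis and `e ∉ B`, then a subset of `B ∪ {e}` of negative defect must have
the form `T' ∪ {e}` with `δ(T') = 0` and `L e ≤ ⟨T'⟩`; so `L e ≤ ⟨T⟩` for every `e ∉ B`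
(`exists_tight`), and in particular `⟨B⟩ = ⟨E⟩`.

It remains to see `B = T`. Suppose `b ∈ B \ T` lies on a circuit `C`. Then `δ(C) < 0`, while
`D = C \ (B \ T)` is a proper subset of `C`, so `dim ⟨D⟩ ≥ |D|`. Since `D` consists of elements
of `C` that lie in `T` or outside `B`, we have `⟨D⟩ ≤ ⟨T⟩ ∩ ⟨C⟩`, and therefore
`dim ⟨T ∪ C⟩ ≤ |T| + (|C| - 1) - |D| = |T ∪ (C ∩ B)| - 1`, which contradicts the independence of
`B`. So `B` is a BK-set with `|B| = dim ⟨B⟩ = dim ⟨E⟩`, the largest cardinality an independent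
set can have.
-/

namespace Mink

variable (K : Type*) [Field K] {V : Type*} [AddCommGroup V] [Module K V] {ι : Type*}

/-- The defect of a subset `S` of the index set: `dim ⟨S⟩ - |S|`,
where `⟨S⟩ = ∑ i ∈ S, L i`. -/
noncomputable def defect (L : ι → Submodule K V) (S : Finset ι) : ℤ :=
  (Module.finrank K ↥(S.sup L) : ℤ) - S.card

/-- `S` is linearly independent in the sense of Minkowski:
every subset of `S` has non-negative defect. -/
def Indep (L : ι → Submodule K V) (S : Finset ι) : Prop :=
  ∀ T ⊆ S, 0 ≤ defect K L T

/-- A BK-set: a linearly independent subset with defect 0. -/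
def BKSet (L : ι → Submodule K V) (S : Finset ι) : Prop :=
  Indep K L S ∧ defect K L S = 0

/-- A circuit: a minimal-by-inclusion linearly dependent subset. -/
def Circuit (L : ι → Submodule K V) (C : Finset ι) : Prop :=
  ¬ Indep K L C ∧ ∀ T ⊂ C, Indep K L T

/-- A basis: a maximal-by-inclusion linearly independent subset. -/
def IsBasisSet (L : ι → Submodule K V) (B : Finset ι) : Prop :=
  Indep K L B ∧ ∀ S : Finset ι, Indep K L S → B ⊆ S → S = B

open Classical in
/-- The Minkowski rank: the maximal cardinality of a linearly independent subset. -/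
noncomputable def minkRank [Fintype ι] (L : ι → Submodule K V) : ℕ :=
  ((Finset.univ : Finset (Finset ι)).filter fun S => Indep K L S).sup Finset.card

variable {K}

/-- Submodularity of `S ↦ dim ⟨S⟩`, with `⟨S⟩ ⊓ ⟨T⟩` replaced by any `⟨D⟩` inside it. -/
lemma finrank_union_add_le [FiniteDimensional K V] [DecidableEq ι] (L : ι → Submodule K V)
    (S T D : Finset ι) (hS : D.sup L ≤ S.sup L) (hT : D.sup L ≤ T.sup L) :
    Module.finrank K ↥((S ∪ T).sup L) + Module.finrank K ↥(D.sup L) ≤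
      Module.finrank K ↥(S.sup L) + Module.finrank K ↥(T.sup L) := by
  rw [Finset.sup_union, ← Submodule.finrank_sup_add_finrank_inf_eq (S.sup L) (T.sup L)]
  exact Nat.add_le_add_left (Submodule.finrank_mono (le_inf hS hT)) _

lemma defect_union_eq_zero [FiniteDimensional K V] [DecidableEq ι] {L : ι → Submodule K V}
    {B S T : Finset ι} (hB : Indep K L B) (hSB : S ⊆ B) (hTB : T ⊆ B)
    (hS : defect K L S = 0) (hT : defect K L T = 0) : defect K L (S ∪ T) = 0 := by
  have h1 := hB (S ∪ T) (Finset.union_subset hSB hTB)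
  have h2 := hB (S ∩ T) (Finset.inter_subset_left.trans hSB)
  have h3 := finrank_union_add_le L S T (S ∩ T) (Finset.sup_mono Finset.inter_subset_left)
    (Finset.sup_mono Finset.inter_subset_right)
  have h4 := Finset.card_union_add_card_inter S T
  unfold defect at *
  omega

lemma Circuit.defect_neg {L : ι → Submodule K V} {C : Finset ι} (hC : Circuit K L C) :
    defect K L C < 0 := by
  by_contra! h
  refine hC.1 fun T hT => ?_
  rcases hT.eq_or_ssubset with rfl | hT
  · exact h
  · exact hC.2 T hT T subset_rfl

/-- If `B` is independent but `B ∪ {e}` is not, then `L e` lies in the span of a subset of `B` of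
defect `0`. -/
lemma exists_tight_of_not_indep_insert [FiniteDimensional K V] [DecidableEq ι]
    {L : ι → Submodule K V} {B : Finset ι} (hB : Indep K L B) {e : ι}
    (he : ¬ Indep K L (insert e B)) :
    ∃ T ⊆ B, defect K L T = 0 ∧ L e ≤ T.sup L := by
  unfold Indep at he
  push Not at he
  obtain ⟨T, hT, hneg⟩ := he
  have heT : e ∈ T := by
    by_contra h
    exact absurd (hB T ((Finset.subset_insert_iff_of_notMem h).1 hT)) (not_le.2 hneg)
  have hsub : T.erase e ⊆ B := Finset.subset_insert_iff.1 hT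
  have h1 := hB _ hsub
  have hle : (T.erase e).sup L ≤ T.sup L := Finset.sup_mono (Finset.erase_subset e T)
  have h2 := Submodule.finrank_mono hle
  have h3 := Finset.card_erase_add_one heT
  unfold defect at *
  have heq : (T.erase e).sup L = T.sup L := Submodule.eq_of_le_of_finrank_le hle (by omega)
  refine ⟨T.erase e, hsub, by omega, ?_⟩
  rw [heq]
  exact Finset.le_sup heT

/-- A single subset of defect `0` of a basis `B` spans everything outside `B`. -/
lemma IsBasisSet.exists_tight [FiniteDimensional K V] [DecidableEq ι] {L : ι → Submodule K V}
    {B : Finset ι} (hB : IsBasisSet K L B) :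
    ∃ T ⊆ B, defect K L T = 0 ∧ ∀ e ∉ B, L e ≤ T.sup L := by
  classical
  have key : (B.powerset.filter fun T => defect K L T = 0).sup id ⊆ B ∧
      defect K L ((B.powerset.filter fun T => defect K L T = 0).sup id) = 0 := by
    refine Finset.sup_induction (p := fun T => T ⊆ B ∧ defect K L T = 0) ?_ ?_ ?_
    · simp [defect]
    · rintro S ⟨hS, hS0⟩ T ⟨hT, hT0⟩
      exact ⟨Finset.union_subset hS hT, defect_union_eq_zero hB.1 hS hT hS0 hT0⟩
    · intro T hT
      simpa using hT
  refine ⟨_, key.1, key.2, fun e he => ?_⟩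
  obtain ⟨T, hTB, hT0, hTe⟩ := exists_tight_of_not_indep_insert (e := e) hB.1 fun h =>
    he (hB.2 _ h (Finset.subset_insert e B) ▸ Finset.mem_insert_self e B)
  refine hTe.trans (Finset.sup_mono ?_)
  exact Finset.le_sup (f := id)
    (Finset.mem_filter.2 ⟨Finset.mem_powerset.2 hTB, hT0⟩)

/-- A circuit meets an independent set `B` only inside any `T ⊆ B` of defect `0` whose span
contains every `L e` with `e ∉ B`. -/
lemma Circuit.mem_tight [FiniteDimensional K V] [DecidableEq ι] {L : ι → Submodule K V}
    {B C T : Finset ι} (hB : Indep K L B) (hC : Circuit K L C) (hTB : T ⊆ B)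
    (hT : defect K L T = 0) (hspan : ∀ e ∉ B, L e ≤ T.sup L) {b : ι} (hbB : b ∈ B)
    (hbC : b ∈ C) : b ∈ T := by
  by_contra hbT
  have hDC : C \ (B \ T) ⊂ C :=
    Finset.ssubset_iff_subset_ne.2 ⟨Finset.sdiff_subset, fun h => by
      have hb := h ▸ hbC
      simp [hbB, hbT] at hb⟩
  have hD := hC.2 _ hDC _ subset_rfl
  have hDT : (C \ (B \ T)).sup L ≤ T.sup L := by
    refine Finset.sup_le fun i hi => ?_
    by_cases hiB : i ∈ B
    · exact Finset.le_sup (by simp only [Finset.mem_sdiff] at hi; tauto)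
    · exact hspan i hiB
  have h1 := finrank_union_add_le L T C _ hDT (Finset.sup_mono hDC.subset)
  have h2 := hC.defect_neg
  have h3 := hB (T ∪ C ∩ (B \ T)) (Finset.union_subset hTB
    (Finset.inter_subset_right.trans Finset.sdiff_subset))
  have h4 : Module.finrank K ↥((T ∪ C ∩ (B \ T)).sup L) ≤ Module.finrank K ↥((T ∪ C).sup L) :=
    Submodule.finrank_mono (Finset.sup_mono
      (Finset.union_subset_union_right Finset.inter_subset_left))
  have h5 : (T ∪ C ∩ (B \ T)).card = T.card + (C ∩ (B \ T)).card :=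
    Finset.card_union_of_disjoint
      (Finset.disjoint_sdiff.mono_right Finset.inter_subset_right)
  have h6 := Finset.card_sdiff_add_card_inter C (B \ T)
  unfold defect at *
  omega

lemma exists_isBasisSet [Fintype ι] (L : ι → Submodule K V) : ∃ B, IsBasisSet K L B := by
  obtain ⟨B, hB⟩ := (Set.toFinite {S : Finset ι | Indep K L S}).exists_maximal
    ⟨∅, fun T hT => by simp [Finset.subset_empty.1 hT, defect]⟩
  exact ⟨B, hB.prop, fun S hS hBS => (hB.eq_of_le hS hBS).symm⟩

variable (K)

/-- if the tuple `E` is cyclic (a union of circuits), then every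
basis of `E` is a BK-set; in particular the Minkowski rank of `E` equals
`dim ⟨E⟩`. -/
theorem statement14 [FiniteDimensional K V] [Fintype ι] [DecidableEq ι] (L : ι → Submodule K V)
    (hcyc : ∃ 𝒞 : Finset (Finset ι), (∀ C ∈ 𝒞, Circuit K L C) ∧
        𝒞.sup id = (Finset.univ : Finset ι)) :
    (∀ B : Finset ι, IsBasisSet K L B → BKSet K L B) ∧
    minkRank K L = Module.finrank K ↥((Finset.univ : Finset ι).sup L) := by
  classical
  obtain ⟨𝒞, h𝒞, hsup⟩ := hcyc
  have main : ∀ B : Finset ι, IsBasisSet K L B →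
      BKSet K L B ∧ B.card = Module.finrank K ↥((Finset.univ : Finset ι).sup L) := by
    intro B hB
    obtain ⟨T, hTB, hT, hspan⟩ := hB.exists_tight
    have hBT : B ⊆ T := fun b hb => by
      have hb' : b ∈ 𝒞.sup id := hsup ▸ Finset.mem_univ b
      obtain ⟨C, hC, hbC⟩ := Finset.mem_sup.1 hb'
      exact (h𝒞 C hC).mem_tight hB.1 hTB hT hspan hb hbC
    obtain rfl : T = B := hTB.antisymm hBT
    have hE : (Finset.univ : Finset ι).sup L = T.sup L := by
      refine le_antisymm (Finset.sup_le fun i _ => ?_) (Finset.sup_mono (Finset.subset_univ T))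
      by_cases hi : i ∈ T
      · exact Finset.le_sup hi
      · exact hspan i hi
    refine ⟨⟨hB.1, hT⟩, ?_⟩
    rw [hE]
    unfold defect at hT
    omega
  refine ⟨fun B hB => (main B hB).1, le_antisymm (Finset.sup_le fun S hS => ?_) ?_⟩
  · have h1 := (Finset.mem_filter.1 hS).2 S subset_rfl
    have h2 : Module.finrank K ↥(S.sup L) ≤ Module.finrank K ↥((Finset.univ : Finset ι).sup L) :=
      Submodule.finrank_mono (Finset.sup_mono (Finset.subset_univ S))
    unfold defect at h1
    omega
  · obtain ⟨B, hB⟩ := exists_isBasisSet L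
    rw [← (main B hB).2]
    exact Finset.le_sup (f := Finset.card)
      (Finset.mem_filter.2 ⟨Finset.mem_univ B, hB.1⟩)

end Mink
end

section
/- Let the tuple E be linearly dependent and let M ⊆ E be the union of all circuits of E (the maximal essential subset). Then δ(M) = min_{T ⊆ E} δ(T), and M is contained in every subset of E attaining this minimal defect; i.e. M is the unique minimal-by-inclusion subset of E of minimal defect. Moreover, the quotient tuple of E by M (the family (π(L_i))_{i ∈ E ∖ M} in V/⟨M⟩) is linearly independent. -/
/-!
The defect is submodular: `δ(A ∪ B) + δ(A ∩ B) ≤ δ(A) + δ(B)` (`defect_union_add_inter_le`),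
because `⟨A ∩ B⟩ ⊆ ⟨A⟩ ∩ ⟨B⟩`. Everything follows from this.

A circuit `C` has `δ(C) ≤ -1`, while its proper subsets have defect `≥ 0`. So if `T` has minimal
defect and `C ∩ T ≠ C`, then submodularity gives `δ(C ∪ T) < δ(T)`, which is absurd. Hence every
subset of minimal defect contains all circuits.

To see that the union of all circuits does attain the minimum, fix a maximal independent set `B`.
For every `T`, discarding `T \ B` gives `δ(T) ≥ δ(T ∩ B) - |T \ B| ≥ -|E \ B|`. On the other hand,
for each `y ∉ B` there is a circuit `C y` with `y ∈ C y ⊆ B ∪ {y}`; adjoining these circuits one at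
a time decreases the defect by at least one each time, so `N = ⋃ C y` has defect `≤ -|E \ B|`.
Thus `N` has minimal defect, hence contains the union `M` of all circuits, and so `N = M`.

Finally, for `T` disjoint from `M` the defect of `T` in the quotient by `⟨M⟩` is
`δ(T ∪ M) - δ(M)`, which is non-negative by minimality of `δ(M)`.
-/

namespace Mink

variable (K : Type*) [Field K] {V : Type*} [AddCommGroup V] [Module K V] {ι : Type*}

section Aux

variable {K}

open Classical in
lemma defect_union_add_inter_le [FiniteDimensional K V] (L : ι → Submodule K V)
    (A B : Finset ι) :
    defect K L (A ∪ B) + defect K L (A ∩ B) ≤ defect K L A + defect K L B := by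
  have h1 := Submodule.finrank_sup_add_finrank_inf_eq (A.sup L) (B.sup L)
  have h2 : Module.finrank K ↥((A ∩ B).sup L) ≤ Module.finrank K ↥(A.sup L ⊓ B.sup L) :=
    Submodule.finrank_mono (le_inf (Finset.sup_mono Finset.inter_subset_left)
      (Finset.sup_mono Finset.inter_subset_right))
  have h3 := Finset.card_union_add_card_inter A B
  unfold defect
  rw [Finset.sup_union]
  lia

lemma Circuit.defect_nonneg_of_ssubset {L : ι → Submodule K V} {C T : Finset ι}
    (hC : Circuit K L C) (hT : T ⊂ C) : 0 ≤ defect K L T :=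
  hC.2 T hT T subset_rfl

lemma exists_circuit_subset {L : ι → Submodule K V} {S : Finset ι} (hS : ¬ Indep K L S) :
    ∃ C ⊆ S, Circuit K L C := by
  induction S using Finset.strongInduction with
  | H S ih =>
    by_cases h : ∀ T ⊂ S, Indep K L T
    · exact ⟨S, subset_rfl, hS, h⟩
    · push Not at h
      obtain ⟨T, hT, hd⟩ := h
      obtain ⟨C, hC, hC'⟩ := ih T hT hd
      exact ⟨C, hC.trans hT.subset, hC'⟩

lemma Circuit.subset_of_minimal [FiniteDimensional K V] {L : ι → Submodule K V}
    {C T : Finset ι} (hC : Circuit K L C) (hT : ∀ T', defect K L T ≤ defect K L T') :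
    C ⊆ T := by
  classical
  by_contra h
  have h1 := defect_union_add_inter_le L C T
  have h2 : 0 ≤ defect K L (C ∩ T) := hC.defect_nonneg_of_ssubset
    (Finset.inter_subset_left.ssubset_of_ne fun e => h (Finset.inter_eq_left.mp e))
  have h3 := hC.defect_neg
  have h4 := hT (C ∪ T)
  linarith

/-- The span of `T` in the quotient tuple by `P` is the image of `⟨T⟩ + P` in `V ⧸ P`, so its
dimension is smaller than that of `⟨T⟩ + P` by `dim P`. -/
lemma finrank_quotient_sup_add [FiniteDimensional K V] (L : ι → Submodule K V)
    (P : Submodule K V) (T : Finset ι) :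
    Module.finrank K ↥(T.sup fun i => (L i).map P.mkQ) + Module.finrank K P =
      Module.finrank K ↥(T.sup L ⊔ P) := by
  have h1 : (T.sup fun i => (L i).map P.mkQ) = (T.sup L ⊔ P).map P.mkQ := by
    rw [Submodule.map_sup, Submodule.mkQ_map_self, sup_bot_eq]
    simp only [Finset.sup_eq_iSup, Submodule.map_iSup]
  have h2 := LinearMap.finrank_range_add_finrank_ker (P.mkQ.domRestrict (T.sup L ⊔ P))
  rw [LinearMap.range_domRestrict, LinearMap.ker_domRestrict, Submodule.ker_mkQ] at h2
  rw [h1, ← h2, (Submodule.comapSubtypeEquivOfLe (le_sup_right : P ≤ T.sup L ⊔ P)).finrank_eq]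

open Classical in
/-- Some union of circuits has minimal defect. -/
lemma exists_circuits_minimal [FiniteDimensional K V] [Fintype ι] (L : ι → Submodule K V) :
    ∃ (Y : Finset ι) (C : ι → Finset ι), (∀ y ∈ Y, Circuit K L (C y)) ∧
      ∀ T, defect K L (Y.biUnion C) ≤ defect K L T := by
  have hempty : Indep K L ∅ := fun T hT => by simp [Finset.subset_empty.mp hT, defect]
  obtain ⟨B, hB⟩ := (Set.toFinite {S : Finset ι | Indep K L S}).exists_maximal ⟨∅, hempty⟩
  have hBi : Indep K L B := hB.prop
  have hex : ∀ y, y ∉ B → ∃ C, Circuit K L C ∧ y ∈ C ∧ C ⊆ insert y B := by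
    intro y hy
    have hd : ¬ Indep K L (insert y B) := fun h =>
      hy (hB.le_of_ge h (Finset.subset_insert y B) (Finset.mem_insert_self y B))
    obtain ⟨C, hCs, hC⟩ := exists_circuit_subset hd
    refine ⟨C, hC, ?_, hCs⟩
    by_contra hyC
    exact hC.1 fun T hT => hBi T (hT.trans ((Finset.subset_insert_iff_of_notMem hyC).mp hCs))
  choose! C hC hyC hCs using hex
  have hU : ∀ Y : Finset ι, Y ⊆ Bᶜ → defect K L (Y.biUnion C) ≤ -(Y.card : ℤ) := by
    intro Y
    induction Y using Finset.induction_on with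
    | empty =>
      unfold defect
      rw [Finset.biUnion_empty, Finset.sup_empty, finrank_bot]
      simp
    | insert y Y hy ih =>
      intro hY
      have hyB : y ∉ B := Finset.mem_compl.mp (hY (Finset.mem_insert_self _ _))
      have hYB : Y ⊆ Bᶜ := (Finset.subset_insert _ _).trans hY
      -- the earlier circuits lie in `B ∪ Y`, so none of them contains the new element `y`
      have hyU : y ∉ Y.biUnion C := by
        intro h
        obtain ⟨z, hz, hyz⟩ := Finset.mem_biUnion.mp h
        rcases Finset.mem_insert.mp (hCs z (Finset.mem_compl.mp (hYB hz)) hyz) with rfl | h'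
        · exact hy hz
        · exact hyB h'
      have h1 := defect_union_add_inter_le L (C y) (Y.biUnion C)
      have h2 : 0 ≤ defect K L (C y ∩ Y.biUnion C) := (hC y hyB).defect_nonneg_of_ssubset
        (Finset.inter_subset_left.ssubset_of_ne fun e =>
          hyU (Finset.inter_eq_left.mp e (hyC y hyB)))
      have h3 := (hC y hyB).defect_neg
      have h4 := ih hYB
      rw [Finset.biUnion_insert, Finset.card_insert_of_notMem hy]
      push_cast
      lia
  refine ⟨Bᶜ, C, fun y hy => hC y (Finset.mem_compl.mp hy), fun T => ?_⟩
  have h1 := hU Bᶜ subset_rfl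
  have h2 := hBi (T ∩ B) Finset.inter_subset_right
  have h3 : Module.finrank K ↥((T ∩ B).sup L) ≤ Module.finrank K ↥(T.sup L) :=
    Submodule.finrank_mono (Finset.sup_mono Finset.inter_subset_left)
  have h4 := Finset.card_inter_add_card_sdiff T B
  have h5 : (T \ B).card ≤ Bᶜ.card := Finset.card_le_card fun i hi => by
    simp only [Finset.mem_sdiff] at hi
    simpa using hi.2
  refine h1.trans ?_
  unfold defect at h2 ⊢
  lia

end Aux

open Classical in
/-- for a linearly dependent tuple `E`, the union `M` of all circuits
attains the minimal defect, is contained in every subset attaining the minimal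
defect (so it is the unique minimal-by-inclusion subset of minimal defect), and the
quotient tuple of `E` by `M` is linearly independent. -/
theorem statement18 [FiniteDimensional K V] [Fintype ι] (L : ι → Submodule K V)
    (hdep : ¬ Indep K L (Finset.univ : Finset ι))
    (M : Finset ι)
    (hM : M = ((Finset.univ : Finset (Finset ι)).filter fun C => Circuit K L C).sup id) :
    (∀ T : Finset ι, defect K L M ≤ defect K L T) ∧
    (∀ T : Finset ι, (∀ T' : Finset ι, defect K L T ≤ defect K L T') → M ⊆ T) ∧
    (∀ T : Finset ι, Disjoint T M →
        0 ≤ defect K (fun i => (L i).map (M.sup L).mkQ) T) := by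
  obtain ⟨Y, C, hC, hmin⟩ := exists_circuits_minimal L
  have hMN : M = Y.biUnion C := by
    refine le_antisymm ?_ ?_
    · rw [hM]
      refine Finset.sup_le fun D hD => ?_
      exact (Finset.mem_filter.mp hD).2.subset_of_minimal hmin
    · rw [hM]
      refine Finset.biUnion_subset.mpr fun y hy => ?_
      exact Finset.le_sup (f := id) (Finset.mem_filter.mpr ⟨Finset.mem_univ _, hC y hy⟩)
  rw [← hMN] at hmin
  refine ⟨hmin, fun T hT => ?_, fun T hT => ?_⟩
  · rw [hMN]
    exact Finset.biUnion_subset.mpr fun y hy => (hC y hy).subset_of_minimal hT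
  · have h1 := finrank_quotient_sup_add L (M.sup L) T
    have h2 := hmin (T ∪ M)
    have h3 := Finset.card_union_of_disjoint hT
    unfold defect at h2 ⊢
    rw [Finset.sup_union] at h2
    lia

end Mink
end
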